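/- Let θ : ℝⁿ → [−∞,+∞] be a symmetric, proper, lower semicontinuous function, let g = θ∘λ be the associated spectral function, and let X ∈ Sⁿ with θ(λ(X)) finite. Then g is subdifferentially continuous at X if and only if θ is subdifferentially continuous at λ(X). -/

import Mathlib

open Filter Topology Matrix

noncomputable section

namespace SpecPaper

/-! ## Generic variational analysis definitions over a topological real vector space -/

variable {E : Type*}

section Generic

variable [AddCommGroup E] [Module ℝ E] [TopologicalSpace E]

/-- `f x` is finite (neither `+∞` nor `-∞`). -/
def IsFiniteAt (f : E → EReal) (x : E) : Prop :=
  f x ≠ ⊤ ∧ f x ≠ ⊥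

/-- The norm induced by a given inner product. -/
noncomputable def nrm (ip : E → E → ℝ) (x : E) : ℝ :=
  Real.sqrt (ip x x)

/-- The subderivative `df(x)(w)`. -/
noncomputable def subderiv (f : E → EReal) (x w : E) : EReal :=
  Filter.liminf (fun p : ℝ × E => (((p.1)⁻¹ : ℝ) : EReal) * (f (x + p.1 • p.2) - f x))
    ((nhdsWithin (0 : ℝ) (Set.Ioi 0)) ×ˢ nhds w)

/-- The second-order difference quotient `Δ²ₜ f(x,v)(w)`. -/
noncomputable def sdq2 (ip : E → E → ℝ) (f : E → EReal) (x v : E) (t : ℝ) (w : E) : EReal :=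
  (((2 / t ^ 2) : ℝ) : EReal) * (f (x + t • w) - f x - ((t * ip v w : ℝ) : EReal))

/-- The second subderivative `d²f(x,v)(w)`. -/
noncomputable def subderiv2 (ip : E → E → ℝ) (f : E → EReal) (x v w : E) : EReal :=
  Filter.liminf (fun p : ℝ × E => sdq2 ip f x v p.1 p.2)
    ((nhdsWithin (0 : ℝ) (Set.Ioi 0)) ×ˢ nhds w)

/-- Twice epi-differentiability of `f` at `x` for `v`. -/
def TwiceEpiDiff (ip : E → E → ℝ) (f : E → EReal) (x v : E) : Prop :=
  IsFiniteAt f x ∧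
    ∀ t : ℕ → ℝ, (∀ k, 0 < t k) → Tendsto t atTop (nhds 0) →
      ∀ w : E, ∃ ws : ℕ → E, Tendsto ws atTop (nhds w) ∧
        Tendsto (fun k => sdq2 ip f x v (t k) (ws k)) atTop (nhds (subderiv2 ip f x v w))

/-- `v` is a regular subgradient of `f` at `x`. -/
def RegSubgrad (ip : E → E → ℝ) (f : E → EReal) (x v : E) : Prop :=
  IsFiniteAt f x ∧
    (0 : EReal) ≤ Filter.liminf
      (fun y : E =>
        (((nrm ip (y - x))⁻¹ : ℝ) : EReal) * (f y - f x - ((ip v (y - x) : ℝ) : EReal)))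
      (nhdsWithin x {x}ᶜ)

/-- `v` is a (limiting) subgradient of `f` at `x`. -/
def LimSubgrad (ip : E → E → ℝ) (f : E → EReal) (x v : E) : Prop :=
  ∃ xs vs : ℕ → E, (∀ k, RegSubgrad ip f (xs k) (vs k)) ∧
    Tendsto xs atTop (nhds x) ∧ Tendsto vs atTop (nhds v) ∧
    Tendsto (fun k => f (xs k)) atTop (nhds (f x))

/-- The tangent cone to `C` at `x`. -/
def tangentCone (C : Set E) (x : E) : Set E :=
  {w | ∃ (t : ℕ → ℝ) (ws : ℕ → E), (∀ k, 0 < t k) ∧ Tendsto t atTop (nhds 0) ∧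
    Tendsto ws atTop (nhds w) ∧ ∀ k, x + t k • ws k ∈ C}

/-- The regular normal cone to `C` at `x`. -/
def regNormalCone (ip : E → E → ℝ) (C : Set E) (x : E) : Set E :=
  {v | ∀ w ∈ tangentCone C x, ip v w ≤ 0}

/-- The limiting normal cone to `C` at `x`. -/
def limNormalCone (ip : E → E → ℝ) (C : Set E) (x : E) : Set E :=
  {v | ∃ xs vs : ℕ → E, (∀ k, xs k ∈ C) ∧ (∀ k, vs k ∈ regNormalCone ip C (xs k)) ∧
    Tendsto xs atTop (nhds x) ∧ Tendsto vs atTop (nhds v)}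

/-- The critical cone `C_f(x,v)`. -/
def criticalCone (ip : E → E → ℝ) (f : E → EReal) (x v : E) : Set E :=
  {w | subderiv f x w = ((ip v w : ℝ) : EReal)}

/-- `f` is locally Lipschitz continuous at `x` relative to its domain. -/
def LocLipAtRelDom (ip : E → E → ℝ) (f : E → EReal) (x : E) : Prop :=
  IsFiniteAt f x ∧
    ∃ V ∈ nhds x, ∃ ℓ : ℝ, 0 ≤ ℓ ∧
      ∀ a ∈ V, ∀ b ∈ V, f a ≠ ⊤ → f b ≠ ⊤ →
        f a ≠ ⊥ ∧ f b ≠ ⊥ ∧ |(f a).toReal - (f b).toReal| ≤ ℓ * nrm ip (a - b)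

/-- `f` is locally Lipschitz continuous relative to its domain. -/
def LocLipRelDom (ip : E → E → ℝ) (f : E → EReal) : Prop :=
  ∀ x : E, f x ≠ ⊤ → LocLipAtRelDom ip f x

/-- `v` is a proximal subgradient of `f` at `x`. -/
def ProxSubgrad (ip : E → E → ℝ) (f : E → EReal) (x v : E) : Prop :=
  IsFiniteAt f x ∧
    ∃ r > (0 : ℝ), ∃ ε > (0 : ℝ), ∀ x' : E, nrm ip (x' - x) ≤ ε →
      f x + ((ip v (x' - x) - r / 2 * ip (x' - x) (x' - x) : ℝ) : EReal) ≤ f x'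

/-- `f` is prox-regular at `x` for `v`. -/
def ProxRegularAtFor (ip : E → E → ℝ) (f : E → EReal) (x v : E) : Prop :=
  IsFiniteAt f x ∧
    (∃ δ > (0 : ℝ), LowerSemicontinuousOn f {x' | nrm ip (x' - x) < δ}) ∧
    ∃ ε > (0 : ℝ), ∃ r : ℝ, 0 ≤ r ∧
      ∀ x₁ v₁ : E, LimSubgrad ip f x₁ v₁ → nrm ip (x₁ - x) < ε → nrm ip (v₁ - v) < ε →
        f x₁ < f x + (ε : EReal) →
        ∀ x' : E, nrm ip (x' - x) < ε →
          f x₁ + ((ip v₁ (x' - x₁) - r / 2 * ip (x' - x₁) (x' - x₁) : ℝ) : EReal) ≤ f x'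

/-- `f` is prox-regular at `x` (for every subgradient). -/
def ProxRegularAt (ip : E → E → ℝ) (f : E → EReal) (x : E) : Prop :=
  ∀ v : E, LimSubgrad ip f x v → ProxRegularAtFor ip f x v

/-- `f` is subdifferentially continuous at `x`. -/
def SubdiffContAt (ip : E → E → ℝ) (f : E → EReal) (x : E) : Prop :=
  ∀ v : E, LimSubgrad ip f x v →
    ∀ xs vs : ℕ → E, (∀ k, LimSubgrad ip f (xs k) (vs k)) →
      Tendsto xs atTop (nhds x) → Tendsto vs atTop (nhds v) →
      Tendsto (fun k => f (xs k)) atTop (nhds (f x))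

/-- `f` is prox-bounded. -/
def ProxBounded (ip : E → E → ℝ) (f : E → EReal) : Prop :=
  ∃ α c : ℝ, ∀ x : E, (c : EReal) ≤ f x + ((α * ip x x : ℝ) : EReal)

/-- The proximal mapping (as a set of minimizers). -/
def proxSet (ip : E → E → ℝ) (f : E → EReal) (γ : ℝ) (x : E) : Set E :=
  {w | ∀ w' : E,
    f w + ((1 / (2 * γ) * ip (w - x) (w - x) : ℝ) : EReal) ≤
      f w' + ((1 / (2 * γ) * ip (w' - x) (w' - x) : ℝ) : EReal)}

/-- The proximal map of `f` with parameter `γ` is single-valued around `z` and the resulting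
map is directionally differentiable at `z`. -/
def ProxSingleDirDiff (ip : E → E → ℝ) (f : E → EReal) (γ : ℝ) (z : E) : Prop :=
  ∃ V ∈ nhds z, ∃ P : E → E, (∀ u ∈ V, proxSet ip f γ u = {P u}) ∧
    ∀ h : E, ∃ L : E,
      Tendsto (fun t : ℝ => t⁻¹ • (P (z + t • h) - P z)) (nhdsWithin 0 (Set.Ioi 0)) (nhds L)

/-- The parabolic difference quotient. -/
noncomputable def parabQuot (f : E → EReal) (x w : E) (t : ℝ) (z : E) : EReal :=
  (((2 / t ^ 2) : ℝ) : EReal) *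
    (f (x + t • w + (t ^ 2 / 2) • z) - f x - ((t * (subderiv f x w).toReal : ℝ) : EReal))

/-- The parabolic subderivative `d²f(x)(w | z)`. -/
noncomputable def parabSubderiv (f : E → EReal) (x w z : E) : EReal :=
  Filter.liminf (fun p : ℝ × E => parabQuot f x w p.1 p.2)
    ((nhdsWithin (0 : ℝ) (Set.Ioi 0)) ×ˢ nhds z)

/-- `f` is parabolically epi-differentiable at `x` for `w`. -/
def ParabEpiDiff (f : E → EReal) (x w : E) : Prop :=
  (∃ z : E, parabSubderiv f x w z < ⊤) ∧
    ∀ t : ℕ → ℝ, (∀ k, 0 < t k) → Tendsto t atTop (nhds 0) →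
      ∀ z : E, ∃ zs : ℕ → E, Tendsto zs atTop (nhds z) ∧
        Tendsto (fun k => parabQuot f x w (t k) (zs k)) atTop (nhds (parabSubderiv f x w z))

/-- `φ` is a generalized quadratic form: its domain is a linear subspace and on the domain it is
given by a symmetric linear operator. -/
def IsGQF (ip : E → E → ℝ) (φ : E → EReal) : Prop :=
  (φ 0 ≠ ⊤) ∧
  (∀ x y : E, φ x ≠ ⊤ → φ y ≠ ⊤ → φ (x + y) ≠ ⊤) ∧
  (∀ (c : ℝ) (x : E), φ x ≠ ⊤ → φ (c • x) ≠ ⊤) ∧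
  ∃ L : E → E,
    (∀ x y : E, φ x ≠ ⊤ → φ y ≠ ⊤ → L (x + y) = L x + L y) ∧
    (∀ (c : ℝ) (x : E), φ x ≠ ⊤ → L (c • x) = c • L x) ∧
    (∀ x y : E, φ x ≠ ⊤ → φ y ≠ ⊤ → ip (L x) y = ip x (L y)) ∧
    (∀ x : E, φ x ≠ ⊤ → φ x = ((ip (L x) x : ℝ) : EReal))

/-- `f` is generalized twice differentiable at `x` for `v`. -/
def GenTwiceDiff (ip : E → E → ℝ) (f : E → EReal) (x v : E) : Prop :=
  TwiceEpiDiff ip f x v ∧ IsGQF ip (subderiv2 ip f x v)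

/-- Proto-differentiability of a set-valued map `F` at `x` for `y ∈ F x`. -/
def ProtoDiff (F : E → Set E) (x y : E) : Prop :=
  ∀ w η : E, (w, η) ∈ tangentCone {p : E × E | p.2 ∈ F p.1} (x, y) →
    ∀ t : ℕ → ℝ, (∀ k, 0 < t k) → Tendsto t atTop (nhds 0) →
      ∃ ws ηs : ℕ → E, Tendsto ws atTop (nhds w) ∧ Tendsto ηs atTop (nhds η) ∧
        ∀ k, y + t k • ηs k ∈ F (x + t k • ws k)

/-- Relative interior of a set (interior relative to its affine hull). -/
def relInterior (C : Set E) : Set E :=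
  {y | y ∈ C ∧ ∃ V ∈ nhds y, ∀ z ∈ V, z ∈ affineSpan ℝ C → z ∈ C}

/-- A polyhedral set: the intersection of finitely many closed half-spaces. -/
def IsPolyhedral (ip : E → E → ℝ) (C : Set E) : Prop :=
  ∃ (k : ℕ) (a : Fin k → E) (b : Fin k → ℝ), C = {x | ∀ j : Fin k, ip (a j) x ≤ b j}

/-- The subdifferential of a convex function. -/
def convexSubdiff (ip : E → E → ℝ) (f : E → EReal) (x : E) : Set E :=
  {v | ∀ z : E, f x + ((ip v (z - x) : ℝ) : EReal) ≤ f z}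

/-- The natural inner product on `E × ℝ`. -/
def ipProd (ip : E → E → ℝ) : E × ℝ → E × ℝ → ℝ :=
  fun p q => ip p.1 q.1 + p.2 * q.2

/-- The epigraph of `f`. -/
def epiSet (f : E → EReal) : Set (E × ℝ) :=
  {p | f p.1 ≤ (p.2 : EReal)}

/-- `f` is subdifferentially regular at `x`. -/
def SubdiffRegularAt (ip : E → E → ℝ) (f : E → EReal) (x : E) : Prop :=
  IsFiniteAt f x ∧
    regNormalCone (ipProd ip) (epiSet f) (x, (f x).toReal) =
      limNormalCone (ipProd ip) (epiSet f) (x, (f x).toReal)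

/-! Real-valued versions: semidifferentiability, gradients. -/

/-- `f` is semidifferentiable at `x`. -/
def SemiDiffAt (f : E → ℝ) (x : E) : Prop :=
  ∀ w : E, ∃ d : ℝ,
    Tendsto (fun p : ℝ × E => (p.1)⁻¹ * (f (x + p.1 • p.2) - f x))
      ((nhdsWithin (0 : ℝ) (Set.Ioi 0)) ×ˢ nhds w) (nhds d)

/-- The (real value of the) subderivative of a real-valued function. -/
noncomputable def dReal (f : E → ℝ) (x w : E) : ℝ :=
  (subderiv (fun y => ((f y : ℝ) : EReal)) x w).toReal

/-- The second-order difference quotient built from the subderivative. -/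
noncomputable def sdq2R (f : E → ℝ) (x : E) (t : ℝ) (w : E) : ℝ :=
  (2 / t ^ 2) * (f (x + t • w) - f x - t * dReal f x w)

/-- `f` is twice semidifferentiable at `x`. -/
def TwiceSemiDiffAt (f : E → ℝ) (x : E) : Prop :=
  SemiDiffAt f x ∧
    ∀ w : E, ∃ d : ℝ,
      Tendsto (fun p : ℝ × E => sdq2R f x p.1 p.2)
        ((nhdsWithin (0 : ℝ) (Set.Ioi 0)) ×ˢ nhds w) (nhds d)

/-- The second semiderivative `d²f(x)(w)` (the liminf; it is the full limit whenever `f` is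
twice semidifferentiable at `x`). -/
noncomputable def secondSemiDeriv (f : E → ℝ) (x w : E) : EReal :=
  Filter.liminf (fun p : ℝ × E => ((sdq2R f x p.1 p.2 : ℝ) : EReal))
    ((nhdsWithin (0 : ℝ) (Set.Ioi 0)) ×ˢ nhds w)

/-- `f` is (Fréchet) differentiable at `x` with gradient `g` (w.r.t. inner product `ip`). -/
def HasGradAt (ip : E → E → ℝ) (f : E → ℝ) (x g : E) : Prop :=
  Tendsto (fun y : E => (nrm ip (y - x))⁻¹ * (f y - f x - ip g (y - x)))
    (nhdsWithin x {x}ᶜ) (nhds 0)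

/-- `f` is locally Lipschitz continuous around `x`. -/
def LocLipAt (ip : E → E → ℝ) (f : E → ℝ) (x : E) : Prop :=
  ∃ V ∈ nhds x, ∃ ℓ : ℝ, 0 ≤ ℓ ∧ ∀ a ∈ V, ∀ b ∈ V, |f a - f b| ≤ ℓ * nrm ip (a - b)

/-- `f` is twice differentiable at `x` with gradient map `G` near `x` and second derivative
(the derivative of `G` at `x`) given by the linear map `Dxx`. -/
def HasSecondDerivAt (ip : E → E → ℝ) (f : E → EReal) (x : E) (G : E → E) (Dxx : E → E) :
    Prop :=
  ∃ V ∈ nhds x, ∃ fr : E → ℝ,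
    (∀ z ∈ V, f z = ((fr z : ℝ) : EReal)) ∧
    (∀ z ∈ V, HasGradAt ip fr z (G z)) ∧
    IsLinearMap ℝ Dxx ∧
    Tendsto (fun z : E => (nrm ip (z - x))⁻¹ • (G z - G x - Dxx (z - x)))
      (nhdsWithin x {x}ᶜ) (nhds 0)

/-- `f` is twice differentiable at `x`. -/
def TwiceDiffAt (ip : E → E → ℝ) (f : E → EReal) (x : E) : Prop :=
  ∃ G Dxx : E → E, HasSecondDerivAt ip f x G Dxx

end Generic

/-! ## Eigenvalues and spectral machinery -/

open scoped Classical in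
/-- The eigenvalues of a real symmetric matrix, arranged in nonincreasing order
(junk value `0` if the matrix is not symmetric). -/
noncomputable def eigval {n : ℕ} (X : Matrix (Fin n) (Fin n) ℝ) : Fin n → ℝ :=
  if h : X.IsHermitian then
    fun i => h.eigenvalues (Tuple.sort (fun j => -h.eigenvalues j) i)
  else 0

/-- `Oⁿ(X)`: orthogonal matrices realizing the ordered spectral decomposition of `X`. -/
def eigOrth {n : ℕ} (X : Matrix (Fin n) (Fin n) ℝ) : Set (Matrix (Fin n) (Fin n) ℝ) :=
  {U | U * Uᵀ = 1 ∧ X = U * Matrix.diagonal (eigval X) * Uᵀ}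

open scoped Classical in
/-- The block `α_m` of indices `j` whose eigenvalue `λ_j(X)` equals `λ_i(X)`. -/
noncomputable def blockSet {n : ℕ} (X : Matrix (Fin n) (Fin n) ℝ) (i : Fin n) :
    Finset (Fin n) :=
  Finset.univ.filter fun j => eigval X j = eigval X i

lemma mem_blockSet_self {n : ℕ} (X : Matrix (Fin n) (Fin n) ℝ) (i : Fin n) :
    i ∈ blockSet X i := by
  simp [blockSet]

/-- The increasing enumeration of the block of `i`. -/
noncomputable def blockEmb {n : ℕ} (X : Matrix (Fin n) (Fin n) ℝ) (i : Fin n) :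
    Fin (blockSet X i).card → Fin n :=
  fun a => ((blockSet X i).orderIsoOfFin rfl a : Fin n)

/-- The position of `i` inside its own block. -/
noncomputable def blockIdx {n : ℕ} (X : Matrix (Fin n) (Fin n) ℝ) (i : Fin n) :
    Fin (blockSet X i).card :=
  ((blockSet X i).orderIsoOfFin rfl).symm ⟨i, mem_blockSet_self X i⟩

/-- The principal submatrix of `M` corresponding to the block of `i` (for `X`). -/
noncomputable def blockMat {n : ℕ} (X M : Matrix (Fin n) (Fin n) ℝ) (i : Fin n) :
    Matrix (Fin (blockSet X i).card) (Fin (blockSet X i).card) ℝ :=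
  Matrix.of fun a b => M (blockEmb X i a) (blockEmb X i b)

/-- The directional derivative `λ'(X;H)` of the ordered eigenvalue map, computed through
`U ∈ Oⁿ(X)`: blockwise ordered eigenvalues of `U_{α_m}ᵀ H U_{α_m}`. -/
noncomputable def lambdaDir {n : ℕ} (X U H : Matrix (Fin n) (Fin n) ℝ) : Fin n → ℝ :=
  fun i => eigval (blockMat X (Uᵀ * H * U) i) (blockIdx X i)

open scoped Classical in
/-- The Moore–Penrose pseudoinverse of a square real matrix, characterized by the four
Penrose equations. -/
noncomputable def pinv {n : ℕ} (A : Matrix (Fin n) (Fin n) ℝ) :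
    Matrix (Fin n) (Fin n) ℝ :=
  if h : ∃ B : Matrix (Fin n) (Fin n) ℝ,
      A * B * A = A ∧ B * A * B = B ∧ (A * B)ᵀ = A * B ∧ (B * A)ᵀ = B * A
  then h.choose else 0

/-- The curvature term `2 ∑ₘ ⟨Diag(y)_{αₘαₘ}, U_{αₘ}ᵀ H (μₘ I - X)† H U_{αₘ}⟩`, written as a
single sum over all indices. -/
noncomputable def curvTerm {n : ℕ} (X U H : Matrix (Fin n) (Fin n) ℝ) (y : Fin n → ℝ) : ℝ :=
  2 * ∑ i : Fin n, y i *
    (Uᵀ * (H * pinv (eigval X i • (1 : Matrix (Fin n) (Fin n) ℝ) - X) * H) * U) i i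

/-- Two symmetric matrices admit a simultaneous ordered spectral decomposition. -/
def simOrdSpec {k : ℕ} (A B : Matrix (Fin k) (Fin k) ℝ) : Prop :=
  ∃ P : Matrix (Fin k) (Fin k) ℝ, P * Pᵀ = 1 ∧
    A = P * Matrix.diagonal (eigval A) * Pᵀ ∧
    B = P * Matrix.diagonal (eigval B) * Pᵀ

/-- The subspace of symmetric `n × n` real matrices. -/
def symSubmodule (n : ℕ) : Submodule ℝ (Matrix (Fin n) (Fin n) ℝ) where
  carrier := {A | A.IsSymm}
  add_mem' := by
    intro a b ha hb
    simp only [Set.mem_setOf_eq, Matrix.IsSymm] at *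
    rw [Matrix.transpose_add, ha, hb]
  zero_mem' := by
    simp only [Set.mem_setOf_eq, Matrix.IsSymm, Matrix.transpose_zero]
  smul_mem' := by
    intro c a ha
    simp only [Set.mem_setOf_eq, Matrix.IsSymm] at *
    rw [Matrix.transpose_smul, ha]

/-- The space `Sⁿ` of symmetric `n × n` real matrices. -/
abbrev Sym (n : ℕ) : Type := ↥(symSubmodule n)

/-- The trace inner product `⟨A, B⟩ = tr(AB)` on `Sⁿ`. -/
noncomputable def ipM {n : ℕ} (A B : Sym n) : ℝ :=
  ((A : Matrix (Fin n) (Fin n) ℝ) * (B : Matrix (Fin n) (Fin n) ℝ)).trace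

/-- The Euclidean inner product on `ℝⁿ`. -/
def ipV {n : ℕ} (v w : Fin n → ℝ) : ℝ :=
  ∑ i, v i * w i

/-- The spectral function `g = θ ∘ λ` on `Sⁿ`. -/
noncomputable def specFn {n : ℕ} (θ : (Fin n → ℝ) → EReal) : Sym n → EReal :=
  fun A => θ (eigval (A : Matrix (Fin n) (Fin n) ℝ))

/-- A function on `ℝⁿ` is symmetric (permutation invariant). -/
def SymmetricFn {n : ℕ} {α : Type*} (θ : (Fin n → ℝ) → α) : Prop :=
  ∀ (x : Fin n → ℝ) (σ : Equiv.Perm (Fin n)), θ (fun i => x (σ i)) = θ x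

/-- The diagonal matrix `Diag(w)` as an element of `Sⁿ`. -/
noncomputable def diagSym {n : ℕ} (w : Fin n → ℝ) : Sym n :=
  ⟨Matrix.diagonal w, Matrix.isSymm_diagonal w⟩

/-- The `i`-th order statistic: `orderStat x i` is the `i`-th largest entry of `x`. -/
noncomputable def orderStat {n : ℕ} (x : Fin n → ℝ) : Fin n → ℝ :=
  fun i => x (Tuple.sort (fun j => -x j) i)


/-! ## Auxiliary lemmas -/

lemma regSubgrad_iff {E : Type*} [AddCommGroup E] [Module ℝ E] [TopologicalSpace E]
    (ip : E → E → ℝ) (f : E → EReal) (x v : E)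
    (hbot : ∀ y, f y ≠ ⊥) (hpos : ∀ w : E, w ≠ 0 → 0 < nrm ip w) :
    RegSubgrad ip f x v ↔ f x ≠ ⊤ ∧ ∀ ε > (0:ℝ), ∀ᶠ y in 𝓝 x, y ≠ x →
      f x + ((ip v (y - x) - ε * nrm ip (y - x) : ℝ) : EReal) ≤ f y := by
  unfold RegSubgrad IsFiniteAt
  rw [Filter.le_liminf_iff']
  have key : ∀ (hx : f x ≠ ⊤) (ε : ℝ) (y : E), y ≠ x →
      ((((-ε : ℝ)) : EReal) ≤
        (((nrm ip (y - x))⁻¹ : ℝ) : EReal) * (f y - f x - ((ip v (y - x) : ℝ) : EReal)) ↔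
      f x + ((ip v (y - x) - ε * nrm ip (y - x) : ℝ) : EReal) ≤ f y) := by
    intro hx ε y hy
    have hN := hpos (y - x) (sub_ne_zero.mpr hy)
    obtain ⟨r, hr⟩ : ∃ r : ℝ, f x = r := ⟨(f x).toReal, (EReal.coe_toReal hx (hbot x)).symm⟩
    rw [hr]
    by_cases hyt : f y = ⊤
    · rw [hyt]
      have : (⊤ : EReal) - (r : EReal) - ((ip v (y - x) : ℝ) : EReal) = ⊤ := by
        rw [EReal.top_sub_coe, EReal.top_sub_coe]
      rw [this, EReal.coe_mul_top_of_pos (inv_pos.mpr hN)]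
      simp
    · obtain ⟨s, hs⟩ : ∃ s : ℝ, f y = s := ⟨(f y).toReal, (EReal.coe_toReal hyt (hbot y)).symm⟩
      rw [hs]
      norm_cast
      rw [← div_eq_inv_mul, le_div_iff₀ hN]
      constructor <;> intro h <;> linarith
  constructor
  · rintro ⟨⟨hx, -⟩, h⟩
    refine ⟨hx, fun ε hε => ?_⟩
    have := h ((-ε : ℝ) : EReal) (by exact_mod_cast neg_lt_zero.mpr hε)
    rw [eventually_nhdsWithin_iff] at this
    filter_upwards [this] with y hy hne
    exact (key hx ε y hne).1 (hy hne)
  · rintro ⟨hx, h⟩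
    refine ⟨⟨hx, hbot x⟩, fun b hb => ?_⟩
    obtain ⟨c, hbc, hc⟩ := EReal.lt_iff_exists_real_btwn.1 hb
    have hc' : c < 0 := by exact_mod_cast hc
    have := h (-c) (by linarith)
    rw [eventually_nhdsWithin_iff]
    filter_upwards [this] with y hy hne
    have h2 := (key hx (-c) y hne).2 (hy hne)
    rw [neg_neg] at h2
    exact hbc.le.trans h2

section Aux
variable {n : ℕ}

abbrev Mat (n : ℕ) := Matrix (Fin n) (Fin n) ℝ

/-- orthogonal matrices -/
def Orth (U : Mat n) : Prop := U * Uᵀ = 1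

lemma Orth.left {U : Mat n} (h : Orth U) : Uᵀ * U = 1 := mul_eq_one_comm.1 h

/-- `U Diag(x) Uᵀ` -/
def cj (U : Mat n) (x : Fin n → ℝ) : Sym n :=
  ⟨U * Matrix.diagonal x * Uᵀ, by
    show (U * Matrix.diagonal x * Uᵀ)ᵀ = _
    simp [Matrix.transpose_mul, Matrix.mul_assoc]⟩

lemma cj_val (U : Mat n) (x : Fin n → ℝ) : (cj U x).val = U * Matrix.diagonal x * Uᵀ := rfl

lemma cj_sub (U : Mat n) (x y : Fin n → ℝ) : cj U x - cj U y = cj U (x - y) := by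
  apply Subtype.ext
  have : Matrix.diagonal (x - y) = Matrix.diagonal x - Matrix.diagonal y := by
    rw [Matrix.diagonal_sub]; rfl
  simp only [Submodule.coe_sub, cj_val, this, Matrix.mul_sub, Matrix.sub_mul]

lemma cj_add_smul (U : Mat n) (x y : Fin n → ℝ) (d : ℝ) :
    cj U (x + d • y) = cj U x + d • cj U y := by
  apply Subtype.ext
  have : Matrix.diagonal (x + d • y) = Matrix.diagonal x + d • Matrix.diagonal y := by
    rw [← Matrix.diagonal_smul, Matrix.diagonal_add]; rfl
  simp only [Submodule.coe_add, Submodule.coe_smul, cj_val, this, Matrix.mul_add, Matrix.add_mul,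
    Matrix.mul_smul, Matrix.smul_mul]

lemma diag_of_cj {U : Mat n} (h : Orth U) (x : Fin n → ℝ) :
    Uᵀ * (cj U x).val * U = Matrix.diagonal x := by
  rw [cj_val]
  calc Uᵀ * (U * Matrix.diagonal x * Uᵀ) * U = (Uᵀ * U) * Matrix.diagonal x * (Uᵀ * U) := by
        simp only [Matrix.mul_assoc]
    _ = _ := by rw [h.left]; simp

lemma cj_of_diag {U : Mat n} (h : Orth U) (x : Fin n → ℝ) (X : Sym n)
    (hX : Uᵀ * X.val * U = Matrix.diagonal x) : X = cj U x := by
  apply Subtype.ext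
  rw [cj_val, ← hX]
  have h' : U * Uᵀ = 1 := h
  calc X.val = (U * Uᵀ) * X.val * (U * Uᵀ) := by rw [h']; simp
    _ = _ := by simp only [Matrix.mul_assoc]

lemma ipM_cj {U : Mat n} (h : Orth U) (x y : Fin n → ℝ) : ipM (cj U x) (cj U y) = ipV x y := by
  unfold ipM ipV
  rw [cj_val, cj_val]
  have : U * Matrix.diagonal x * Uᵀ * (U * Matrix.diagonal y * Uᵀ)
      = U * (Matrix.diagonal x * Matrix.diagonal y) * Uᵀ := by
    calc _ = U * Matrix.diagonal x * (Uᵀ * U) * Matrix.diagonal y * Uᵀ := by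
          simp only [Matrix.mul_assoc]
      _ = _ := by rw [h.left]; simp only [Matrix.mul_assoc, Matrix.one_mul]
  rw [this, Matrix.trace_mul_comm, ← Matrix.mul_assoc, h.left, Matrix.one_mul,
    Matrix.diagonal_mul_diagonal, Matrix.trace_diagonal]

lemma ipM_self (A : Sym n) : ipM A A = ∑ i, ∑ j, A.val i j ^ 2 := by
  unfold ipM
  simp only [Matrix.trace, Matrix.diag, Matrix.mul_apply]
  refine Finset.sum_congr rfl fun i _ => Finset.sum_congr rfl fun j _ => ?_
  have : A.val j i = A.val i j := A.2.apply i j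
  rw [this]; ring

lemma ipV_self (a : Fin n → ℝ) : ipV a a = ∑ i, a i ^ 2 := by
  unfold ipV
  exact Finset.sum_congr rfl fun i _ => by ring

lemma nrmM_pos (w : Sym n) (hw : w ≠ 0) : 0 < nrm ipM w := by
  unfold nrm
  rw [Real.sqrt_pos, ipM_self]
  have hne : ∃ i j, w.val i j ≠ 0 := by
    by_contra! h
    exact hw (Subtype.ext (Matrix.ext h))
  obtain ⟨i, j, hij⟩ := hne
  have h1 : 0 < ∑ j, w.val i j ^ 2 :=
    Finset.sum_pos' (fun _ _ => sq_nonneg _) ⟨j, Finset.mem_univ _, by positivity⟩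
  exact Finset.sum_pos' (fun _ _ => Finset.sum_nonneg fun _ _ => sq_nonneg _)
    ⟨i, Finset.mem_univ _, h1⟩

lemma nrmV_pos (w : Fin n → ℝ) (hw : w ≠ 0) : 0 < nrm ipV w := by
  unfold nrm
  rw [Real.sqrt_pos, ipV_self]
  obtain ⟨i, hi⟩ := Function.ne_iff.1 hw
  have hi' : w i ≠ 0 := hi
  exact Finset.sum_pos' (fun _ _ => sq_nonneg _) ⟨i, Finset.mem_univ _, by positivity⟩

lemma nrm_cj {U : Mat n} (h : Orth U) (x : Fin n → ℝ) : nrm ipM (cj U x) = nrm ipV x := by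
  unfold nrm; rw [ipM_cj h]

lemma continuous_cj (U : Mat n) : Continuous (cj U) := by
  unfold cj
  refine Continuous.subtype_mk ?_ _
  fun_prop

lemma continuous_ipM : Continuous fun p : Sym n × Sym n => ipM p.1 p.2 := by
  unfold ipM
  fun_prop

/-- permutation lemma -/
lemma exists_perm {U U' : Mat n} (h : Orth U) (h' : Orth U') {x y x' y' : Fin n → ℝ}
    (hx : cj U x = cj U' x') (hy : cj U y = cj U' y') :
    ∃ σ : Equiv.Perm (Fin n), x = x' ∘ σ ∧ y = y' ∘ σ := by
  set W : Mat n := U'ᵀ * U with hW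
  have hdet : W.det ≠ 0 := by
    have : W * Wᵀ = 1 := by
      rw [hW, Matrix.transpose_mul, Matrix.transpose_transpose]
      calc U'ᵀ * U * (Uᵀ * U') = U'ᵀ * (U * Uᵀ) * U' := by simp only [Matrix.mul_assoc]
        _ = 1 := by rw [show U * Uᵀ = 1 from h, Matrix.mul_one, h'.left]
    have h2 := congrArg Matrix.det this
    rw [Matrix.det_mul, Matrix.det_one] at h2
    intro h0; rw [h0] at h2; simp at h2
  have inter : ∀ a a' : Fin n → ℝ, cj U a = cj U' a' →
      W * Matrix.diagonal a = Matrix.diagonal a' * W := by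
    intro a a' e
    have e2 := congrArg (fun Z : Sym n => U'ᵀ * Z.val * U) e
    simp only [cj_val] at e2
    calc W * Matrix.diagonal a = U'ᵀ * (U * Matrix.diagonal a * Uᵀ) * U := by
          rw [hW]
          calc _ = U'ᵀ * U * Matrix.diagonal a * (Uᵀ * U) := by rw [h.left, Matrix.mul_one]
            _ = _ := by simp only [Matrix.mul_assoc]
      _ = U'ᵀ * (U' * Matrix.diagonal a' * U'ᵀ) * U := e2
      _ = (U'ᵀ * U') * Matrix.diagonal a' * (U'ᵀ * U) := by simp only [Matrix.mul_assoc]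
      _ = _ := by rw [h'.left, Matrix.one_mul]
  have ent : ∀ a a' : Fin n → ℝ, cj U a = cj U' a' → ∀ i j, W i j ≠ 0 → a j = a' i := by
    intro a a' e i j hij
    have := congrFun (congrFun (inter a a' e) i) j
    rw [Matrix.mul_diagonal, Matrix.diagonal_mul, mul_comm] at this
    exact mul_right_cancel₀ hij this
  rw [Matrix.det_apply] at hdet
  obtain ⟨σ, -, hσ⟩ := Finset.exists_ne_zero_of_sum_ne_zero hdet
  have hprod : ∀ i, W (σ i) i ≠ 0 := by
    intro i h0
    apply hσ
    have hz : ∏ j, W (σ j) j = 0 := Finset.prod_eq_zero (Finset.mem_univ i) h0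
    exact (congrArg (fun r : ℝ => Equiv.Perm.sign σ • r) hz).trans (smul_zero _)
  exact ⟨σ, funext fun i => ent x x' hx _ _ (hprod i), funext fun i => ent y y' hy _ _ (hprod i)⟩

lemma isHermitian_sym (X : Sym n) : X.val.IsHermitian := by
  have h : X.valᵀ = X.val := X.2
  rw [Matrix.IsHermitian, Matrix.conjTranspose_eq_transpose_of_trivial, h]

lemma cj_apply (U : Mat n) (x : Fin n → ℝ) (i j : Fin n) :
    (cj U x).val i j = ∑ k, U i k * x k * U j k := by
  rw [cj_val, Matrix.mul_apply]
  simp only [Matrix.mul_diagonal, Matrix.transpose_apply]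

/-- diagonalization of a symmetric matrix with `eigval` -/
lemma exists_eig (X : Sym n) : ∃ U : Mat n, Orth U ∧ X = cj U (eigval X.val) := by
  have hH : X.val.IsHermitian := isHermitian_sym X
  set σ := Tuple.sort (fun j => -hH.eigenvalues j)
  have he : eigval X.val = hH.eigenvalues ∘ σ := by
    unfold eigval
    rw [dif_pos hH]; rfl
  set U0 : Mat n := hH.eigenvectorUnitary.val
  have hU0 : U0 * U0ᵀ = 1 := by
    have := Unitary.coe_mul_star_self hH.eigenvectorUnitary
    rwa [Unitary.coe_star, Matrix.star_eq_conjTranspose,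
      Matrix.conjTranspose_eq_transpose_of_trivial] at this
  have hX : X.val = U0 * Matrix.diagonal hH.eigenvalues * U0ᵀ := by
    have := hH.spectral_theorem
    rw [Unitary.conjStarAlgAut_apply, Matrix.star_eq_conjTranspose,
      Matrix.conjTranspose_eq_transpose_of_trivial] at this
    exact this
  refine ⟨U0.submatrix id σ, ?_, ?_⟩
  · unfold Orth
    ext i j
    have := congrFun (congrFun hU0 i) j
    rw [← this]
    simp only [Matrix.mul_apply, Matrix.submatrix_apply, Matrix.transpose_apply, id]
    exact Equiv.sum_comp σ (fun k => U0 i k * U0 j k)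
  · apply Subtype.ext
    rw [he]
    ext i j
    rw [cj_apply]
    have h2 : X.val i j = (cj U0 hH.eigenvalues).val i j := by rw [cj_val, ← hX]
    rw [h2, cj_apply]
    exact (Equiv.sum_comp σ (fun k => U0 i k * hH.eigenvalues k * U0 j k)).symm

lemma eigval_antitone (X : Sym n) : Antitone (eigval X.val) := by
  have hH : X.val.IsHermitian := isHermitian_sym X
  have he : eigval X.val = hH.eigenvalues ∘ Tuple.sort (fun j => -hH.eigenvalues j) := by
    unfold eigval
    rw [dif_pos hH]; rfl
  rw [he]
  intro i j hij
  have := Tuple.monotone_sort (fun j => -hH.eigenvalues j) hij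
  simpa using this

/-- conjugating after permutation -/
lemma cj_perm (U : Mat n) (hU : Orth U) (σ : Equiv.Perm (Fin n)) :
    Orth (U.submatrix id σ) ∧ ∀ x, cj (U.submatrix id σ) (x ∘ σ) = cj U x := by
  constructor
  · unfold Orth
    ext i j
    have := congrFun (congrFun (show U * Uᵀ = 1 from hU) i) j
    rw [← this]
    simp only [Matrix.mul_apply, Matrix.submatrix_apply, Matrix.transpose_apply, id]
    exact Equiv.sum_comp σ (fun k => U i k * U j k)
  · intro x
    apply Subtype.ext
    ext i j
    rw [cj_apply, cj_apply]
    exact (Equiv.sum_comp σ (fun k => U i k * x k * U j k))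

lemma specFn_cj {θ : (Fin n → ℝ) → EReal} (hsym : SymmetricFn θ) {U : Mat n} (hU : Orth U)
    (x : Fin n → ℝ) : specFn θ (cj U x) = θ x := by
  obtain ⟨U', hU', h⟩ := exists_eig (cj U x)
  obtain ⟨σ, h1, -⟩ := exists_perm hU hU' h h
  unfold specFn
  have h2 := hsym (eigval (cj U x).val) σ
  rw [← h2]
  exact congrArg θ h1.symm

lemma ipM_sub_right (A B C : Sym n) : ipM A (B - C) = ipM A B - ipM A C := by
  unfold ipM; rw [Submodule.coe_sub, Matrix.mul_sub, Matrix.trace_sub]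

lemma ipM_sub_left (A B C : Sym n) : ipM (B - C) A = ipM B A - ipM C A := by
  unfold ipM; rw [Submodule.coe_sub, Matrix.sub_mul, Matrix.trace_sub]

lemma ipM_add_left (A B C : Sym n) : ipM (B + C) A = ipM B A + ipM C A := by
  unfold ipM; rw [Submodule.coe_add, Matrix.add_mul, Matrix.trace_add]

lemma ipM_smul_left (d : ℝ) (A B : Sym n) : ipM (d • A) B = d * ipM A B := by
  unfold ipM; rw [Submodule.coe_smul, Matrix.smul_mul, Matrix.trace_smul, smul_eq_mul]

lemma ipM_comm (A B : Sym n) : ipM A B = ipM B A := by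
  unfold ipM; rw [Matrix.trace_mul_comm]

lemma ipV_sub_right (a b c : Fin n → ℝ) : ipV a (b - c) = ipV a b - ipV a c := by
  unfold ipV
  rw [← Finset.sum_sub_distrib]
  exact Finset.sum_congr rfl fun i _ => by simp only [Pi.sub_apply]; ring

lemma ipV_sub_left (a b c : Fin n → ℝ) : ipV (b - c) a = ipV b a - ipV c a := by
  unfold ipV
  rw [← Finset.sum_sub_distrib]
  exact Finset.sum_congr rfl fun i _ => by simp only [Pi.sub_apply]; ring

lemma ipV_add_smul_left (a b c : Fin n → ℝ) (d : ℝ) :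
    ipV (b + d • c) a = ipV b a + d * ipV c a := by
  unfold ipV
  rw [Finset.mul_sum, ← Finset.sum_add_distrib]
  exact Finset.sum_congr rfl fun i _ => by
    simp only [Pi.add_apply, Pi.smul_apply, smul_eq_mul]; ring

lemma ipV_comm (a b : Fin n → ℝ) : ipV a b = ipV b a := by
  unfold ipV
  exact Finset.sum_congr rfl fun i _ => mul_comm _ _

/-- The Fan inequality -/
lemma fan {U W : Mat n} (hU : Orth U) (hW : Orth W) {x z : Fin n → ℝ} (hx : Antitone x)
    (hz : Antitone z) : ipM (cj U x) (cj W z) ≤ ipV x z := by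
  set Q : Mat n := Uᵀ * W with hQ
  have hQ1 : Q * Qᵀ = 1 := by
    rw [hQ, Matrix.transpose_mul, Matrix.transpose_transpose]
    calc Uᵀ * W * (Wᵀ * U) = Uᵀ * (W * Wᵀ) * U := by simp only [Matrix.mul_assoc]
      _ = 1 := by rw [show W * Wᵀ = 1 from hW, Matrix.mul_one, hU.left]
  have hQ2 : Qᵀ * Q = 1 := mul_eq_one_comm.1 hQ1
  have htr : ipM (cj U x) (cj W z) = ∑ i, ∑ k, x i * (Q i k ^ 2 * z k) := by
    unfold ipM
    rw [cj_val, cj_val]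
    have e : (U * Matrix.diagonal x * Uᵀ * (W * Matrix.diagonal z * Wᵀ)).trace
        = (Matrix.diagonal x * (Q * Matrix.diagonal z * Qᵀ)).trace := by
      rw [hQ, Matrix.transpose_mul, Matrix.transpose_transpose]
      simp only [Matrix.mul_assoc]
      rw [Matrix.trace_mul_comm]
      simp only [Matrix.mul_assoc]
    rw [e]
    simp only [Matrix.trace, Matrix.diag, Matrix.diagonal_mul]
    refine Finset.sum_congr rfl fun i _ => ?_
    rw [Matrix.mul_apply, Finset.mul_sum]
    refine Finset.sum_congr rfl fun k _ => ?_
    rw [Matrix.mul_diagonal, Matrix.transpose_apply]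
    ring
  set D : Mat n := Matrix.of fun i k => Q i k ^ 2 with hD
  have hDS : D ∈ doublyStochastic ℝ (Fin n) := by
    rw [mem_doublyStochastic_iff_sum]
    refine ⟨fun i j => sq_nonneg _, fun i => ?_, fun j => ?_⟩
    · have := congrFun (congrFun hQ1 i) i
      rw [Matrix.mul_apply, Matrix.one_apply_eq] at this
      rw [← this]
      exact Finset.sum_congr rfl fun k _ => by
        rw [Matrix.transpose_apply]; simp [hD, sq]
    · have := congrFun (congrFun hQ2 j) j
      rw [Matrix.mul_apply, Matrix.one_apply_eq] at this
      rw [← this]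
      exact Finset.sum_congr rfl fun k _ => by
        rw [Matrix.transpose_apply]; simp [hD, sq]
  obtain ⟨w, hw0, hw1, hwD⟩ := exists_eq_sum_perm_of_mem_doublyStochastic hDS
  have hmv : Monovary x z := hx.monovary hz
  have hσ : ∀ σ : Equiv.Perm (Fin n),
      ∑ i, ∑ k, x i * ((σ.permMatrix ℝ) i k * z k) ≤ ipV x z := by
    intro σ
    have h1 : ∑ i, ∑ k, x i * ((σ.permMatrix ℝ) i k * z k) = ∑ i, x i * z (σ i) := by
      refine Finset.sum_congr rfl fun i _ => ?_
      rw [Finset.sum_eq_single (σ i)]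
      · simp [Equiv.Perm.permMatrix, Equiv.toPEquiv_apply, PEquiv.toMatrix_apply]
      · intro k _ hk
        simp [Equiv.Perm.permMatrix, Equiv.toPEquiv_apply, PEquiv.toMatrix_apply, Ne.symm hk]
      · simp
    rw [h1]
    exact hmv.sum_mul_comp_perm_le_sum_mul
  have hDe : ∀ i k, Q i k ^ 2 = ∑ σ, w σ * (σ.permMatrix ℝ) i k := by
    intro i k
    have : D i k = (∑ σ, w σ • σ.permMatrix ℝ : Mat n) i k := by rw [hwD]
    rw [Matrix.sum_apply] at this
    simpa [hD] using this
  rw [htr]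
  calc ∑ i, ∑ k, x i * (Q i k ^ 2 * z k)
      = ∑ σ, w σ * ∑ i, ∑ k, x i * ((σ.permMatrix ℝ) i k * z k) := by
        simp only [hDe, Finset.mul_sum, Finset.sum_mul]
        rw [Finset.sum_comm]
        conv_rhs => rw [Finset.sum_comm]
        conv_rhs => enter [2, i]; rw [Finset.sum_comm]
        rw [Finset.sum_comm]
        refine Finset.sum_congr rfl fun i _ => Finset.sum_congr rfl fun k _ =>
          Finset.sum_congr rfl fun σ _ => by ring
    _ ≤ ∑ σ, w σ * ipV x z :=
        Finset.sum_le_sum fun σ _ => mul_le_mul_of_nonneg_left (hσ σ) (hw0 σ)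
    _ = ipV x z := by rw [← Finset.sum_mul, hw1, one_mul]

lemma regV_iff {θ : (Fin n → ℝ) → EReal} (hbot : ∀ x, θ x ≠ ⊥) (x y : Fin n → ℝ) :
    RegSubgrad ipV θ x y ↔ θ x ≠ ⊤ ∧ ∀ ε > (0:ℝ), ∀ᶠ p in 𝓝 x,
      θ x + ((ipV y (p - x) - ε * nrm ipV (p - x) : ℝ) : EReal) ≤ θ p := by
  rw [regSubgrad_iff ipV θ x y hbot nrmV_pos]
  refine and_congr_right fun _ => forall_congr' fun ε => forall_congr' fun hε =>
    eventually_congr (Eventually.of_forall fun p => ⟨fun h => ?_, fun h _ => h⟩)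
  by_cases hp : p = x
  · subst hp
    simp [ipV, nrm]
  · exact h hp

lemma regM_iff {f : Sym n → EReal} (hbot : ∀ x, f x ≠ ⊥) (x y : Sym n) :
    RegSubgrad ipM f x y ↔ f x ≠ ⊤ ∧ ∀ ε > (0:ℝ), ∀ᶠ p in 𝓝 x,
      f x + ((ipM y (p - x) - ε * nrm ipM (p - x) : ℝ) : EReal) ≤ f p := by
  rw [regSubgrad_iff ipM f x y hbot nrmM_pos]
  refine and_congr_right fun _ => forall_congr' fun ε => forall_congr' fun hε =>
    eventually_congr (Eventually.of_forall fun p => ⟨fun h => ?_, fun h _ => h⟩)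
  by_cases hp : p = x
  · subst hp
    simp [ipM, nrm]
  · exact h hp

lemma ipV_perm (a b : Fin n → ℝ) (σ : Equiv.Perm (Fin n)) : ipV (a ∘ σ) (b ∘ σ) = ipV a b :=
  Equiv.sum_comp σ fun i => a i * b i

lemma regV_perm {θ : (Fin n → ℝ) → EReal} (hsym : SymmetricFn θ) (hbot : ∀ x, θ x ≠ ⊥)
    {x y : Fin n → ℝ} (σ : Equiv.Perm (Fin n)) (h : RegSubgrad ipV θ x y) :
    RegSubgrad ipV θ (x ∘ σ) (y ∘ σ) := by
  rw [regV_iff hbot] at h ⊢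
  have hs : ∀ p, θ (p ∘ σ) = θ p := fun p => hsym p σ
  refine ⟨by rw [hs]; exact h.1, fun ε hε => ?_⟩
  have hc : Tendsto (fun p : Fin n → ℝ => p ∘ σ.symm) (𝓝 (x ∘ σ)) (𝓝 x) := by
    have : Continuous (fun p : Fin n → ℝ => p ∘ σ.symm) := by
      unfold Function.comp; fun_prop
    have h2 := this.tendsto (x ∘ σ)
    rwa [show (x ∘ σ) ∘ σ.symm = x by ext i; simp] at h2
  filter_upwards [hc.eventually (h.2 ε hε)] with p hp
  have e : p - x ∘ σ = (p ∘ σ.symm - x) ∘ σ := by ext i; simp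
  have e2 : θ p = θ (p ∘ σ.symm) := (hsym p σ.symm).symm
  rw [e, hs, e2, ipV_perm]
  unfold nrm at hp ⊢
  rw [ipV_perm]
  exact hp

lemma regV_of_regM {θ : (Fin n → ℝ) → EReal} (hsym : SymmetricFn θ) (hbot : ∀ x, θ x ≠ ⊥)
    {U : Mat n} (hU : Orth U) {x y : Fin n → ℝ}
    (h : RegSubgrad ipM (specFn θ) (cj U x) (cj U y)) : RegSubgrad ipV θ x y := by
  rw [regM_iff (f := specFn θ) (fun Z => hbot _)] at h
  rw [regV_iff hbot]
  rw [specFn_cj hsym hU] at h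
  refine ⟨h.1, fun ε hε => ?_⟩
  filter_upwards [((continuous_cj U).tendsto x).eventually (h.2 ε hε)] with p hp
  rw [specFn_cj hsym hU, cj_sub, ipM_cj hU, nrm_cj hU] at hp
  exact hp

lemma nhds_nrmV {x : Fin n → ℝ} {P : (Fin n → ℝ) → Prop} (h : ∀ᶠ p in 𝓝 x, P p) :
    ∃ η > (0:ℝ), ∀ p, nrm ipV (p - x) < η → P p := by
  obtain ⟨η, hη, hP⟩ := Metric.eventually_nhds_iff.1 h
  refine ⟨η, hη, fun p hp => hP ?_⟩
  rw [dist_pi_lt_iff hη]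
  intro i
  rw [Real.dist_eq]
  refine lt_of_le_of_lt ?_ hp
  unfold nrm
  apply Real.le_sqrt_of_sq_le
  rw [ipV_self, sq_abs]
  exact Finset.single_le_sum (f := fun i => (p - x) i ^ 2) (fun _ _ => sq_nonneg _)
    (Finset.mem_univ i)

lemma nrmM_tendsto (X : Sym n) : Tendsto (fun Z => nrm ipM (Z - X)) (𝓝 X) (𝓝 0) := by
  have : Continuous fun Z : Sym n => nrm ipM (Z - X) := by
    unfold nrm
    exact (continuous_ipM.comp ((continuous_id.sub continuous_const).prodMk
      (continuous_id.sub continuous_const))).sqrt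
  have h := this.tendsto X
  simpa [nrm, ipM] using h

lemma nrmM_sq (A : Sym n) : nrm ipM A ^ 2 = ipM A A := by
  unfold nrm
  rw [Real.sq_sqrt]
  rw [ipM_self]
  exact Finset.sum_nonneg fun _ _ => Finset.sum_nonneg fun _ _ => sq_nonneg _

lemma nrmV_sq (a : Fin n → ℝ) : nrm ipV a ^ 2 = ipV a a := by
  unfold nrm
  rw [Real.sq_sqrt]
  rw [ipV_self]
  exact Finset.sum_nonneg fun _ _ => sq_nonneg _

lemma regM_of_regV_sorted {θ : (Fin n → ℝ) → EReal} (hsym : SymmetricFn θ) (hbot : ∀ x, θ x ≠ ⊥)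
    {U : Mat n} (hU : Orth U) {x y : Fin n → ℝ} (hx : Antitone x) {δ : ℝ} (hδ : 0 < δ)
    (hxy : Antitone (x + δ • y)) (h : RegSubgrad ipV θ x y) :
    RegSubgrad ipM (specFn θ) (cj U x) (cj U y) := by
  rw [regM_iff (f := specFn θ) (fun Z => hbot _), specFn_cj hsym hU]
  rw [regV_iff hbot] at h
  refine ⟨h.1, fun ε hε => ?_⟩
  obtain ⟨η, hη, hP⟩ := nhds_nrmV (h.2 (ε / 2) (by positivity))
  filter_upwards [(nrmM_tendsto (cj U x)).eventually_lt_const hη,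
    (nrmM_tendsto (cj U x)).eventually_lt_const (show 0 < δ * ε by positivity)] with Z hZ1 hZ2
  obtain ⟨W, hW, hZ⟩ := exists_eig Z
  set z := eigval Z.val with hz
  have hza : Antitone z := eigval_antitone Z
  have f1 : ipM (cj U x) Z ≤ ipV x z := by
    rw [hZ]; exact fan hU hW hx hza
  have f2 : ipM (cj U x) Z + δ * ipM (cj U y) Z ≤ ipV x z + δ * ipV y z := by
    have := fan hU hW hxy hza
    rw [← hZ, cj_add_smul, ipM_add_left, ipM_smul_left, ipV_add_smul_left] at this
    exact this
  set N := nrm ipM (Z - cj U x) with hN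
  have hN0 : 0 ≤ N := Real.sqrt_nonneg _
  set M := nrm ipV (z - x) with hM
  have hM0 : 0 ≤ M := Real.sqrt_nonneg _
  have sN : N ^ 2 = ipV z z - 2 * ipM (cj U x) Z + ipV x x := by
    rw [hN, nrmM_sq, ipM_sub_right, ipM_sub_left, ipM_sub_left, ipM_cj hU, ipM_comm Z (cj U x)]
    have : ipM Z Z = ipV z z := by
      conv_lhs => rw [hZ]
      exact ipM_cj hW z z
    rw [this]; ring
  have sM : M ^ 2 = ipV z z - 2 * ipV x z + ipV x x := by
    rw [hM, nrmV_sq, ipV_sub_right, ipV_sub_left, ipV_sub_left, ipV_comm z x]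
    ring
  have hMN : M ≤ N := by
    apply (pow_le_pow_iff_left₀ hM0 hN0 two_ne_zero).1
    linarith
  have hVH : ipM (cj U y) (Z - cj U x) = ipM (cj U y) Z - ipV y x := by
    rw [ipM_sub_right, ipM_cj hU]
  have hyz : ipV y (z - x) = ipV y z - ipV y x := ipV_sub_right _ _ _
  have hfin := hP z (lt_of_le_of_lt hMN hZ1)
  have hgoal : ipM (cj U y) (Z - cj U x) - ε * N ≤ ipV y (z - x) - ε / 2 * M := by
    rw [hVH, hyz]
    have k1 : δ * (ipM (cj U y) Z - ipV y z) ≤ N ^ 2 / 2 := by nlinarith [sq_nonneg M]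
    have k2 : N ^ 2 ≤ δ * ε * N := by nlinarith
    have k3 : δ * (ipM (cj U y) Z - ipV y z) ≤ δ * (ε / 2 * N) := by linarith
    have k4 := le_of_mul_le_mul_left k3 hδ
    have k5 : ε / 2 * M ≤ ε / 2 * N := by gcongr
    linarith
  exact (add_le_add_right (by exact_mod_cast hgoal) (θ x)).trans hfin

lemma exists_lex_sort (x y : Fin n → ℝ) : ∃ σ : Equiv.Perm (Fin n), Antitone (x ∘ σ) ∧
    ∃ δ > (0:ℝ), Antitone (x ∘ σ + δ • (y ∘ σ)) := by
  set F : Fin n → ℝ ×ₗ ℝ := fun i => toLex (-x i, -y i) with hF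
  set σ := Tuple.sort F
  have hmono : Monotone (F ∘ σ) := Tuple.monotone_sort F
  have hcase : ∀ i j, i ≤ j → x (σ j) < x (σ i) ∨ (x (σ i) = x (σ j) ∧ y (σ j) ≤ y (σ i)) := by
    intro i j hij
    have := hmono hij
    simp only [hF, Function.comp, Prod.Lex.toLex_le_toLex] at this
    rcases this with h | ⟨h1, h2⟩
    · left; linarith
    · right; constructor <;> linarith
  have hloc : ∀ p : Fin n × Fin n, ∀ᶠ δ in 𝓝[>] (0:ℝ), p.1 ≤ p.2 →
      x (σ p.2) + δ * y (σ p.2) ≤ x (σ p.1) + δ * y (σ p.1) := by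
    rintro ⟨i, j⟩
    by_cases hij : i ≤ j
    · rcases hcase i j hij with h | ⟨h1, h2⟩
      · have hc : Tendsto (fun δ : ℝ => x (σ i) + δ * y (σ i) - (x (σ j) + δ * y (σ j))) (𝓝 0)
            (𝓝 (x (σ i) - x (σ j))) := by
          have : Continuous (fun δ : ℝ => x (σ i) + δ * y (σ i) - (x (σ j) + δ * y (σ j))) := by
            fun_prop
          simpa using this.tendsto 0
        have := (hc.mono_left nhdsWithin_le_nhds : Tendsto _ (𝓝[>] (0:ℝ)) _).eventually_const_lt
          (sub_pos.2 h)
        filter_upwards [this] with δ hd _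
        linarith
      · filter_upwards [self_mem_nhdsWithin] with δ hd _
        have hd' : (0:ℝ) < δ := hd
        have := mul_le_mul_of_nonneg_left h2 hd'.le
        linarith
    · exact Eventually.of_forall fun _ h => absurd h hij
  have hall := (eventually_all.2 hloc).and self_mem_nhdsWithin
  obtain ⟨δ, h1, h2⟩ := hall.exists
  refine ⟨σ, fun i j hij => ?_, δ, h2, fun i j hij => ?_⟩
  · rcases hcase i j hij with h | h
    · exact h.le
    · exact h.1.ge
  · exact h1 (i, j) hij

lemma regM_of_regV {θ : (Fin n → ℝ) → EReal} (hsym : SymmetricFn θ) (hbot : ∀ x, θ x ≠ ⊥)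
    {U : Mat n} (hU : Orth U) {x y : Fin n → ℝ} (h : RegSubgrad ipV θ x y) :
    RegSubgrad ipM (specFn θ) (cj U x) (cj U y) := by
  obtain ⟨σ, h1, δ, hδ, h2⟩ := exists_lex_sort x y
  obtain ⟨hO, hc⟩ := cj_perm U hU σ
  rw [← hc x, ← hc y]
  exact regM_of_regV_sorted hsym hbot hO h1 hδ h2 (regV_perm hsym hbot σ h)

lemma simul_diag (X V : Sym n) (hXV : X.val * V.val = V.val * X.val) :
    ∃ (U : Mat n) (x y : Fin n → ℝ), Orth U ∧ X = cj U x ∧ V = cj U y := by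
  classical
  have hA : (Matrix.toEuclideanLin X.val).IsSymmetric :=
    Matrix.isHermitian_iff_isSymmetric.1 (isHermitian_sym X)
  have hB : (Matrix.toEuclideanLin V.val).IsSymmetric :=
    Matrix.isHermitian_iff_isSymmetric.1 (isHermitian_sym V)
  have hAB : Commute (Matrix.toEuclideanLin X.val : Module.End ℝ (EuclideanSpace ℝ (Fin n)))
      (Matrix.toEuclideanLin V.val) := by
    apply LinearMap.ext
    intro v
    apply (WithLp.equiv 2 (Fin n → ℝ)).injective
    show X.val *ᵥ (V.val *ᵥ v.ofLp) = V.val *ᵥ (X.val *ᵥ v.ofLp)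
    rw [Matrix.mulVec_mulVec, Matrix.mulVec_mulVec, hXV]
  have hI := LinearMap.IsSymmetric.directSum_isInternal_of_commute hA hB hAB
  have hO := LinearMap.IsSymmetric.orthogonalFamily_eigenspace_inf_eigenspace hA hB
  set S : ℝ × ℝ → Submodule ℝ (EuclideanSpace ℝ (Fin n)) := fun i =>
    (Module.End.eigenspace (Matrix.toEuclideanLin X.val) i.2 ⊓
      Module.End.eigenspace (Matrix.toEuclideanLin V.val) i.1) with hS
  have hfin : {i | S i ≠ ⊥}.Finite :=
    WellFoundedGT.finite_ne_bot_of_iSupIndep hI.submodule_iSupIndep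
  have : Fintype {i // S i ≠ ⊥} := hfin.fintype
  have hI' : DirectSum.IsInternal (fun i : {i // S i ≠ ⊥} => S i) :=
    DirectSum.isInternal_ne_bot_iff.2 hI
  have hO' : OrthogonalFamily ℝ (fun i : {i // S i ≠ ⊥} => S i)
      fun i => (S i).subtypeₗᵢ := hO.comp Subtype.val_injective
  have hn : Module.finrank ℝ (EuclideanSpace ℝ (Fin n)) = n := by simp
  set b := hI'.subordinateOrthonormalBasis hn hO' with hb
  have hmem : ∀ a, ∃ i : ℝ × ℝ, b a ∈ S i := fun a =>
    ⟨_, hI'.subordinateOrthonormalBasis_subordinate hn a hO'⟩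
  choose p hp using hmem
  set U : Mat n := Matrix.of fun i k => (b k).ofLp i with hU
  have hUU : Uᵀ * U = 1 := by
    ext k l
    have := orthonormal_iff_ite.1 b.orthonormal k l
    rw [Matrix.mul_apply, Matrix.one_apply, ← this, PiLp.inner_apply]
    refine Finset.sum_congr rfl fun i _ => ?_
    simp [hU, mul_comm]
  have hOU : Orth U := mul_eq_one_comm.1 hUU
  have hcol : ∀ (M : Mat n) (x : Fin n → ℝ),
      (∀ k, Matrix.toEuclideanLin M (b k) = x k • b k) → Uᵀ * M * U = Matrix.diagonal x := by
    intro M x h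
    have : M * U = U * Matrix.diagonal x := by
      ext i k
      have h1 := congrArg (fun v : EuclideanSpace ℝ (Fin n) => v.ofLp i) (h k)
      rw [Matrix.mul_diagonal, Matrix.mul_apply]
      have h2 : (M *ᵥ (b k).ofLp) i = x k * (b k).ofLp i := h1
      rw [Matrix.mulVec, dotProduct] at h2
      simp only [hU, Matrix.of_apply]
      rw [h2, mul_comm]
    rw [Matrix.mul_assoc, this, ← Matrix.mul_assoc, hUU, Matrix.one_mul]
  refine ⟨U, fun k => (p k).2, fun k => (p k).1, hOU, ?_, ?_⟩
  · exact cj_of_diag hOU _ X (hcol _ _ fun k =>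
      Module.End.mem_eigenspace_iff.1 (Submodule.mem_inf.1 (hp k)).1)
  · exact cj_of_diag hOU _ V (hcol _ _ fun k =>
      Module.End.mem_eigenspace_iff.1 (Submodule.mem_inf.1 (hp k)).2)

open scoped Matrix.Norms.Operator in
lemma exp_curve (K X : Mat n) :
    Tendsto (fun t : ℝ => t⁻¹ • (NormedSpace.exp (t • K) * X * NormedSpace.exp (t • (-K)) - X))
      (𝓝[>] 0) (𝓝 (K * X - X * K)) := by
  have h1 := hasDerivAt_exp_smul_const (𝕂 := ℝ) K 0
  have h2 := hasDerivAt_exp_smul_const (𝕂 := ℝ) (-K) 0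
  rw [zero_smul, NormedSpace.exp_zero, one_mul] at h1 h2
  have h3 := (h1.mul_const X).mul h2
  have h4 := h3.tendsto_slope_zero_right
  have e : K * X * NormedSpace.exp ((0:ℝ) • (-K)) + NormedSpace.exp ((0:ℝ) • K) * X * (-K)
      = K * X - X * K := by
    simp [sub_eq_add_neg]
  rw [← e]
  have e2 : ∀ t : ℝ, t⁻¹ • (NormedSpace.exp (t • K) * X * NormedSpace.exp (t • (-K)) - X)
      = t⁻¹ • (NormedSpace.exp ((0 + t) • K) * X * NormedSpace.exp ((0 + t) • (-K))
        - NormedSpace.exp ((0:ℝ) • K) * X * NormedSpace.exp ((0:ℝ) • (-K))) := by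
    intro t
    simp
  simp_rw [e2]
  exact h4

lemma exp_orth (K : Mat n) (hK : Kᵀ = -K) (t : ℝ) :
    (NormedSpace.exp (t • K))ᵀ = NormedSpace.exp (t • (-K)) ∧ Orth (NormedSpace.exp (t • K)) := by
  have h1 : (NormedSpace.exp (t • K))ᵀ = NormedSpace.exp (t • (-K)) := by
    rw [← Matrix.exp_transpose, Matrix.transpose_smul, hK]
  refine ⟨h1, ?_⟩
  unfold Orth
  rw [h1, smul_neg, Matrix.exp_neg]
  exact Matrix.mul_nonsing_inv _ ((Matrix.isUnit_iff_isUnit_det _).1 (Matrix.isUnit_exp _))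

lemma nrmM_smul {c : ℝ} (hc : 0 ≤ c) (A : Sym n) : nrm ipM (c • A) = c * nrm ipM A := by
  unfold nrm
  rw [ipM_smul_left, ipM_comm, ipM_smul_left, ← mul_assoc, Real.sqrt_mul (mul_self_nonneg c),
    Real.sqrt_mul_self hc]

lemma continuous_nrmM : Continuous fun A : Sym n => nrm ipM A := by
  unfold nrm
  exact (continuous_ipM.comp (continuous_id.prodMk continuous_id)).sqrt

lemma reg_commute {θ : (Fin n → ℝ) → EReal} (hsym : SymmetricFn θ) (hbot : ∀ x, θ x ≠ ⊥)
    {X V : Sym n} (h : RegSubgrad ipM (specFn θ) X V) : X.val * V.val = V.val * X.val := by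
  have hXt : X.valᵀ = X.val := X.2
  have hVt : V.valᵀ = V.val := V.2
  set K : Mat n := V.val * X.val - X.val * V.val with hKdef
  have hK : Kᵀ = -K := by
    rw [hKdef, Matrix.transpose_sub, Matrix.transpose_mul, Matrix.transpose_mul, hXt, hVt, neg_sub]
  set R : ℝ → Mat n := fun t => NormedSpace.exp (t • K) with hR
  have hRo : ∀ t, Orth (R t) := fun t => (exp_orth K hK t).2
  obtain ⟨U, hU, hXU⟩ := exists_eig X
  set x := eigval X.val
  set γ : ℝ → Sym n := fun t => cj (R t * U) x with hγ
  have hRU : ∀ t, Orth (R t * U) := by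
    intro t
    unfold Orth
    rw [Matrix.transpose_mul]
    calc R t * U * (Uᵀ * (R t)ᵀ) = R t * (U * Uᵀ) * (R t)ᵀ := by simp only [Matrix.mul_assoc]
      _ = 1 := by rw [show U * Uᵀ = 1 from hU, Matrix.mul_one]; exact hRo t
  have hγval : ∀ t, (γ t).val =
      NormedSpace.exp (t • K) * X.val * NormedSpace.exp (t • (-K)) := by
    intro t
    have e : X.val = U * Matrix.diagonal x * Uᵀ := by
      conv_lhs => rw [hXU]
      rfl
    rw [← (exp_orth K hK t).1, e, hγ]
    simp only [cj_val, hR, Matrix.transpose_mul, Matrix.mul_assoc]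
  have hDsym : (K * X.val - X.val * K) ∈ symSubmodule n := by
    show (K * X.val - X.val * K)ᵀ = _
    rw [Matrix.transpose_sub, Matrix.transpose_mul, Matrix.transpose_mul, hXt, hK]
    simp only [Matrix.mul_neg, Matrix.neg_mul]
    abel
  set D : Sym n := ⟨K * X.val - X.val * K, hDsym⟩ with hD
  set q : ℝ → Sym n := fun t => t⁻¹ • (γ t - X) with hq
  have hqD : Tendsto q (𝓝[>] 0) (𝓝 D) := by
    rw [tendsto_subtype_rng]
    refine (exp_curve K X.val).congr fun t => ?_
    rw [hq]
    simp only [Submodule.coe_smul, Submodule.coe_sub, hγval]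
  have hid : Tendsto (fun t : ℝ => t) (𝓝[>] 0) (𝓝 0) := tendsto_id.mono_left nhdsWithin_le_nhds
  have hγX : Tendsto γ (𝓝[>] 0) (𝓝 X) := by
    have h1 : Tendsto (fun t => X + t • q t) (𝓝[>] 0) (𝓝 (X + (0:ℝ) • D)) :=
      tendsto_const_nhds.add (hid.smul hqD)
    rw [zero_smul, add_zero] at h1
    refine h1.congr' ?_
    filter_upwards [self_mem_nhdsWithin] with t ht
    have ht' : t ≠ 0 := ne_of_gt ht
    rw [hq]
    simp only [smul_smul, mul_inv_cancel₀ ht', one_smul, add_sub_cancel]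
  rw [regM_iff (f := specFn θ) (fun Z => hbot _)] at h
  have hgX : specFn θ X = θ x := rfl
  have hgγ : ∀ t, specFn θ (γ t) = θ x := fun t => specFn_cj hsym (hRU t) x
  obtain ⟨r, hr⟩ : ∃ r : ℝ, θ x = r := ⟨(θ x).toReal, (EReal.coe_toReal h.1 (hbot x)).symm⟩
  have hle : ∀ ε > (0:ℝ), ipM V D ≤ ε * nrm ipM D := by
    intro ε hε
    have hev := hγX.eventually (h.2 ε hε)
    have l1 : Tendsto (fun t => ipM V (q t)) (𝓝[>] 0) (𝓝 (ipM V D)) :=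
      (continuous_ipM.comp (continuous_const.prodMk continuous_id)).tendsto D |>.comp hqD
    have l2 : Tendsto (fun t => ε * nrm ipM (q t)) (𝓝[>] 0) (𝓝 (ε * nrm ipM D)) :=
      ((continuous_nrmM.tendsto D).comp hqD).const_mul ε
    refine le_of_tendsto_of_tendsto l1 l2 ?_
    filter_upwards [hev, self_mem_nhdsWithin] with t ht ht0
    have ht0' : (0:ℝ) < t⁻¹ := inv_pos.2 ht0
    rw [hgX, hgγ, hr] at ht
    have ht2 : r + (ipM V (γ t - X) - ε * nrm ipM (γ t - X)) ≤ r := by exact_mod_cast ht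
    have e1 : ipM V (q t) = t⁻¹ * ipM V (γ t - X) := by
      rw [hq, ipM_comm, ipM_smul_left, ipM_comm]
    have e2 : nrm ipM (q t) = t⁻¹ * nrm ipM (γ t - X) := nrmM_smul ht0'.le _
    rw [e1, e2]
    have := mul_le_mul_of_nonneg_left (show ipM V (γ t - X) ≤ ε * nrm ipM (γ t - X) by linarith)
      ht0'.le
    linarith
  have hle0 : ipM V D ≤ 0 := by
    have l : Tendsto (fun ε : ℝ => ε * nrm ipM D) (𝓝[>] 0) (𝓝 0) := by
      simpa using hid.mul_const (nrm ipM D)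
    refine ge_of_tendsto l ?_
    filter_upwards [self_mem_nhdsWithin] with ε hε using hle ε hε
  have hval : ipM V D = ∑ i, ∑ j, K i j ^ 2 := by
    have e1 : ipM V D = (K * Kᵀ).trace := by
      show (V.val * (K * X.val - X.val * K)).trace = _
      rw [hK, Matrix.mul_sub, Matrix.trace_sub]
      have a1 : (V.val * (K * X.val)).trace = (K * (X.val * V.val)).trace := by
        rw [Matrix.trace_mul_comm, Matrix.mul_assoc]
      have a2 : (V.val * (X.val * K)).trace = (K * (V.val * X.val)).trace := by
        rw [← Matrix.mul_assoc, Matrix.trace_mul_comm]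
      rw [a1, a2, ← Matrix.trace_sub, ← Matrix.mul_sub, hKdef, neg_sub]
    rw [e1]
    simp only [Matrix.trace, Matrix.diag, Matrix.mul_apply, Matrix.transpose_apply, sq]
  have hK0 : K = 0 := by
    rw [hval] at hle0
    have h0 := le_antisymm hle0
      (Finset.sum_nonneg fun _ _ => Finset.sum_nonneg fun _ _ => sq_nonneg _)
    ext i j
    have h1 := (Finset.sum_eq_zero_iff_of_nonneg (s := Finset.univ)
      (f := fun i => ∑ j, K i j ^ 2)
      (fun _ _ => Finset.sum_nonneg fun _ _ => sq_nonneg _)).1 h0 i (Finset.mem_univ i)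
    have h2 := (Finset.sum_eq_zero_iff_of_nonneg (s := Finset.univ) (f := fun j => K i j ^ 2)
      (fun _ _ => sq_nonneg _)).1 h1 j (Finset.mem_univ j)
    exact (pow_eq_zero_iff two_ne_zero).1 h2
  exact (sub_eq_zero.1 hK0).symm

lemma regM_decomp {θ : (Fin n → ℝ) → EReal} (hsym : SymmetricFn θ) (hbot : ∀ x, θ x ≠ ⊥)
    {X V : Sym n} (h : RegSubgrad ipM (specFn θ) X V) :
    ∃ (U : Mat n) (x y : Fin n → ℝ), Orth U ∧ X = cj U x ∧ V = cj U y ∧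
      RegSubgrad ipV θ x y := by
  obtain ⟨U, x, y, hU, hX, hV⟩ := simul_diag X V (reg_commute hsym hbot h)
  refine ⟨U, x, y, hU, hX, hV, regV_of_regM hsym hbot hU ?_⟩
  rwa [← hX, ← hV]

lemma isCompact_orth : IsCompact {U : Mat n | Orth U} := by
  have hbox : IsCompact (Set.pi Set.univ fun _ : Fin n => Set.pi Set.univ fun _ : Fin n =>
      Set.Icc (-1:ℝ) 1) :=
    isCompact_univ_pi fun _ => isCompact_univ_pi fun _ => isCompact_Icc
  have hcl : IsClosed {U : Mat n | Orth U} := by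
    unfold Orth
    exact isClosed_eq (by fun_prop) continuous_const
  refine IsCompact.of_isClosed_subset (X := Mat n) hbox hcl ?_
  intro U hU i _ j _
  have h1 := congrFun (congrFun (show U * Uᵀ = 1 from hU) i) i
  rw [Matrix.mul_apply, Matrix.one_apply_eq] at h1
  simp only [Matrix.transpose_apply] at h1
  have h2 : U i j * U i j ≤ 1 := by
    rw [← h1]
    exact Finset.single_le_sum (f := fun j => U i j * U i j) (fun _ _ => mul_self_nonneg _)
      (Finset.mem_univ j)
  exact abs_le.1 (abs_le_one_iff_mul_self_le_one.2 h2)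

lemma cj_limit {Us : ℕ → Mat n} {xs : ℕ → Fin n → ℝ} {U : Mat n} {X : Sym n}
    (hUs : ∀ k, Orth (Us k)) (hU : Orth U) (hlim : Tendsto Us atTop (𝓝 U))
    (hX : Tendsto (fun k => cj (Us k) (xs k)) atTop (𝓝 X)) :
    ∃ x, Tendsto xs atTop (𝓝 x) ∧ X = cj U x := by
  have hXm : Tendsto (fun k => (cj (Us k) (xs k)).val) atTop (𝓝 X.val) :=
    (continuous_subtype_val.tendsto X).comp hX
  have hc : Continuous fun p : Mat n × Mat n => p.1ᵀ * p.2 * p.1 := by fun_prop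
  have h1 := (hc.tendsto (U, X.val)).comp (hlim.prodMk_nhds hXm)
  have h2 : Tendsto (fun k => (Matrix.diagonal (xs k) : Mat n)) atTop (𝓝 (Uᵀ * X.val * U)) := by
    refine h1.congr fun k => ?_
    exact diag_of_cj (hUs k) (xs k)
  have hd : Continuous fun M : Mat n => M.diag := by fun_prop
  have h3 : Tendsto xs atTop (𝓝 (Uᵀ * X.val * U).diag) := by
    refine ((hd.tendsto _).comp h2).congr fun k => ?_
    exact Matrix.diag_diagonal (xs k)
  refine ⟨_, h3, cj_of_diag hU _ X ?_⟩
  have hdd : Continuous fun v : Fin n → ℝ => (Matrix.diagonal v : Mat n) := by fun_prop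
  exact tendsto_nhds_unique h2 ((hdd.tendsto _).comp h3)

lemma subseq_limit {Us : ℕ → Mat n} {xs ys : ℕ → Fin n → ℝ} {X V : Sym n}
    (hUs : ∀ k, Orth (Us k))
    (hX : Tendsto (fun k => cj (Us k) (xs k)) atTop (𝓝 X))
    (hV : Tendsto (fun k => cj (Us k) (ys k)) atTop (𝓝 V)) :
    ∃ (φ : ℕ → ℕ) (U : Mat n) (x y : Fin n → ℝ), StrictMono φ ∧ Orth U ∧
      Tendsto (xs ∘ φ) atTop (𝓝 x) ∧ Tendsto (ys ∘ φ) atTop (𝓝 y) ∧ X = cj U x ∧ V = cj U y := by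
  haveI : FirstCountableTopology (Mat n) :=
    inferInstanceAs (FirstCountableTopology (Fin n → Fin n → ℝ))
  obtain ⟨U, hU, φ, hφ, hlim⟩ := isCompact_orth.tendsto_subseq (x := Us) hUs
  obtain ⟨x, hx, hXx⟩ := cj_limit (Us := Us ∘ φ) (xs := xs ∘ φ) (fun k => hUs _) hU hlim
    (hX.comp hφ.tendsto_atTop)
  obtain ⟨y, hy, hVy⟩ := cj_limit (Us := Us ∘ φ) (xs := ys ∘ φ) (fun k => hUs _) hU hlim
    (hV.comp hφ.tendsto_atTop)
  exact ⟨φ, U, x, y, hφ, hU, hx, hy, hXx, hVy⟩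

lemma limM_of_limV {θ : (Fin n → ℝ) → EReal} (hsym : SymmetricFn θ) (hbot : ∀ x, θ x ≠ ⊥)
    {U : Mat n} (hU : Orth U) {x y : Fin n → ℝ} (h : LimSubgrad ipV θ x y) :
    LimSubgrad ipM (specFn θ) (cj U x) (cj U y) := by
  obtain ⟨xs, vs, h1, h2, h3, h4⟩ := h
  refine ⟨fun k => cj U (xs k), fun k => cj U (vs k), fun k => regM_of_regV hsym hbot hU (h1 k),
    ((continuous_cj U).tendsto x).comp h2, ((continuous_cj U).tendsto y).comp h3, ?_⟩
  simp only [specFn_cj hsym hU]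
  exact h4

lemma limV_perm {θ : (Fin n → ℝ) → EReal} (hsym : SymmetricFn θ) (hbot : ∀ x, θ x ≠ ⊥)
    {x y : Fin n → ℝ} (σ : Equiv.Perm (Fin n)) (h : LimSubgrad ipV θ x y) :
    LimSubgrad ipV θ (x ∘ σ) (y ∘ σ) := by
  obtain ⟨xs, vs, h1, h2, h3, h4⟩ := h
  have hc : Continuous (fun p : Fin n → ℝ => p ∘ σ) := by
    unfold Function.comp; fun_prop
  have hs : ∀ p, θ (p ∘ σ) = θ p := fun p => hsym p σ
  refine ⟨fun k => xs k ∘ σ, fun k => vs k ∘ σ, fun k => regV_perm hsym hbot σ (h1 k),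
    (hc.tendsto x).comp h2, (hc.tendsto y).comp h3, ?_⟩
  simp only [hs]
  exact h4

lemma limV_of_limM {θ : (Fin n → ℝ) → EReal} (hsym : SymmetricFn θ) (hbot : ∀ x, θ x ≠ ⊥)
    {X V : Sym n} (h : LimSubgrad ipM (specFn θ) X V) :
    ∃ (U : Mat n) (x y : Fin n → ℝ), Orth U ∧ X = cj U x ∧ V = cj U y ∧
      LimSubgrad ipV θ x y := by
  obtain ⟨Xs, Vs, h1, h2, h3, h4⟩ := h
  choose Us xs ys hU hX hV hr using fun k => regM_decomp hsym hbot (h1 k)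
  obtain ⟨φ, U, x, y, hφ, hUo, hx, hy, hXx, hVy⟩ := subseq_limit hU
    (h2.congr hX) (h3.congr hV)
  refine ⟨U, x, y, hUo, hXx, hVy, xs ∘ φ, ys ∘ φ, fun k => hr _, hx, hy, ?_⟩
  have h5 := h4.comp hφ.tendsto_atTop
  rw [hXx, specFn_cj hsym hUo] at h5
  refine h5.congr fun k => ?_
  simp only [Function.comp]
  rw [hX (φ k), specFn_cj hsym (hU _)]

lemma subdiffCont_perm {θ : (Fin n → ℝ) → EReal} (hsym : SymmetricFn θ) (hbot : ∀ x, θ x ≠ ⊥)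
    {x : Fin n → ℝ} (σ : Equiv.Perm (Fin n)) (h : SubdiffContAt ipV θ (x ∘ σ)) :
    SubdiffContAt ipV θ x := by
  intro v hv xs vs hk hx hvs
  have hc : Continuous (fun p : Fin n → ℝ => p ∘ σ) := by
    unfold Function.comp; fun_prop
  have hs : ∀ p, θ (p ∘ σ) = θ p := fun p => hsym p σ
  have := h (v ∘ σ) (limV_perm hsym hbot σ hv) (fun k => xs k ∘ σ) (fun k => vs k ∘ σ)
    (fun k => limV_perm hsym hbot σ (hk k)) ((hc.tendsto x).comp hx) ((hc.tendsto v).comp hvs)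
  simpa only [hs] using this

end Aux

/-- Proposition 4.5: `g` is subdifferentially continuous at `X` iff `θ` is
subdifferentially continuous at `λ(X)`. -/
theorem subdiff_cont_spectral {n : ℕ} (θ : (Fin n → ℝ) → EReal) (X : Sym n)
    (hsym : SymmetricFn θ)
    (hproper : (∃ x : Fin n → ℝ, θ x ≠ ⊤) ∧ ∀ x : Fin n → ℝ, θ x ≠ ⊥)
    (hlsc : LowerSemicontinuous θ)
    (hfin : IsFiniteAt θ (eigval X.val)) :
    SubdiffContAt ipM (specFn θ) X ↔ SubdiffContAt ipV θ (eigval X.val) := by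
  have hbot := hproper.2
  constructor
  · intro h v hv xs vs hk hx hvs
    obtain ⟨U, hU, hXU⟩ := exists_eig X
    have hv' := limM_of_limV hsym hbot hU hv
    rw [← hXU] at hv'
    have h1 := ((continuous_cj U).tendsto _).comp hx
    rw [← hXU] at h1
    have := h _ hv' (fun k => cj U (xs k)) (fun k => cj U (vs k))
      (fun k => limM_of_limV hsym hbot hU (hk k)) h1 (((continuous_cj U).tendsto _).comp hvs)
    simp only [specFn_cj hsym hU] at this
    exact this
  · intro h V hV Xs Vs hk hX hVs
    refine tendsto_of_subseq_tendsto fun ns hns => ?_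
    choose Us xs ys hU hXk hVk hr using fun k => limV_of_limM hsym hbot (hk (ns k))
    obtain ⟨φ, U, x, y, hφ, hUo, hx, hy, hXx, hVy⟩ := subseq_limit hU
      ((hX.comp hns).congr hXk) ((hVs.comp hns).congr hVk)
    refine ⟨φ, ?_⟩
    obtain ⟨U', x', y', hU', hX', hV', hl⟩ := limV_of_limM hsym hbot hV
    obtain ⟨σ, hσx, hσy⟩ := exists_perm hUo hU' (hXx.symm.trans hX') (hVy.symm.trans hV')
    have hl2 : LimSubgrad ipV θ x y := by
      rw [hσx, hσy]; exact limV_perm hsym hbot σ hl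
    obtain ⟨U₁, hU₁, hX₁⟩ := exists_eig X
    obtain ⟨τ, hτ, -⟩ := exists_perm hU₁ hUo (hX₁.symm.trans hXx) (hX₁.symm.trans hXx)
    rw [hτ] at h
    have hcx := subdiffCont_perm hsym hbot τ h
    have h5 := hcx y hl2 (xs ∘ φ) (ys ∘ φ) (fun k => hr _) hx hy
    rw [hXx, specFn_cj hsym hUo]
    refine h5.congr fun k => ?_
    simp only [Function.comp]
    rw [hXk (φ k), specFn_cj hsym (hU _)]

end SpecPaper
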